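/- Every variety of continuous algebras is an HSP-class, i.e., satisfaction of equations between extended terms is preserved by homomorphic images, subalgebras, and products: let Σ be a signature and t = t' an equation between extended terms over a finite set V₀ of variables. (H) If e : A → B is a surjective continuous Σ-homomorphism and A satisfies t = t', then B satisfies t = t'. (S) If m : B → A is a continuous Σ-homomorphism that is an order-embedding (x ⊑ y in B iff m(x) ⊑ m(y) in A) and A satisfies t = t', then B satisfies t = t'. (P) If (A_j)_{j∈J} is a family of continuous Σ-algebras each satisfying t = t', then the product ∏_{j∈J} A_j, with coordinatewise order and operations, satisfies t = t'. -/

import Mathlib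

/-! Homomorphisms transport defined values of extended terms forward (`Evals.map`); pulling an
interpretation back along a surjection then gives (H). Order-embedding homomorphisms also reflect
definedness (`Evals.reflect`): an ascending chain of values in the image comes from an ascending
chain in the domain, whose join is preserved. With injectivity this gives (S). In a product, a tuple
of values of a term in the factors is its value in the product (`Evals.pi`), because order, operations
and joins are coordinatewise; this gives (P). -/

open OmegaCompletePartialOrder

universe u v w

/-- A function between ω-cpos is (ω-)continuous if it is monotone and preserves
joins of ω-chains. -/
def OmegaContinuous {α : Type u} {β : Type v} [OmegaCompletePartialOrder α]
    [OmegaCompletePartialOrder β] (f : α → β) : Prop :=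
  ∃ hm : Monotone f, ∀ ch : Chain α, f (ωSup ch) = ωSup (ch.map ⟨f, hm⟩)

/-- A continuous `Σ`-algebra for a signature `Sg : ℕ → Type` (the family of sets of `n`-ary
operation symbols): an ω-cpo `A` with, for each `σ ∈ Sg n`, a continuous operation
`A^n → A` (the power `Fin n → A` carrying the coordinatewise order). -/
structure ContSigmaAlg (Sg : ℕ → Type u) (A : Type v) [OmegaCompletePartialOrder A] where
  op : ∀ {n : ℕ}, Sg n → (Fin n → A) → A
  op_cont : ∀ {n : ℕ} (σ : Sg n), OmegaContinuous (op σ)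

/-- A continuous `Σ`-homomorphism: a continuous map preserving all the operations. -/
structure IsContHom {Sg : ℕ → Type u} {A : Type v} {B : Type w}
    [OmegaCompletePartialOrder A] [OmegaCompletePartialOrder B]
    (algA : ContSigmaAlg Sg A) (algB : ContSigmaAlg Sg B) (h : A → B) : Prop where
  cont : OmegaContinuous h
  map_op : ∀ {n : ℕ} (σ : Sg n) (a : Fin n → A), h (algA.op σ a) = algB.op σ (h ∘ a)

/-- Extended terms over a signature `Sg` and a set `V` of variables: ordinary terms together
with formal countable joins `⋁_{k ∈ ℕ} t_k`. -/
inductive ExtTerm (Sg : ℕ → Type u) (V : Type v) : Type (max u v)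
  | var : V → ExtTerm Sg V
  | app : ∀ {n : ℕ}, Sg n → (Fin n → ExtTerm Sg V) → ExtTerm Sg V
  | join : (ℕ → ExtTerm Sg V) → ExtTerm Sg V

/-- The (partial) interpretation of extended terms: `Evals alg f t a` says that under the
interpretation `f : V → A` of the variables, the extended term `t` is defined and has value
`a`.  A formal join `⋁_k t_k` is defined iff each `t_k` is defined and the values form an
ascending chain, in which case its value is the join of the chain. -/
inductive Evals {Sg : ℕ → Type u} {V : Type v} {A : Type w} [OmegaCompletePartialOrder A]
    (alg : ContSigmaAlg Sg A) (f : V → A) : ExtTerm Sg V → A → Prop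
  | var (v : V) : Evals alg f (.var v) (f v)
  | app {n : ℕ} (σ : Sg n) (t : Fin n → ExtTerm Sg V) (a : Fin n → A) :
      (∀ i, Evals alg f (t i) (a i)) → Evals alg f (.app σ t) (alg.op σ a)
  | join (t : ℕ → ExtTerm Sg V) (a : ℕ → A) (ha : ∀ k, a k ≤ a (k + 1)) :
      (∀ k, Evals alg f (t k) (a k)) →
      Evals alg f (.join t) (ωSup ⟨a, monotone_nat_of_le_succ ha⟩)

/-- An extended term is definable in an algebra if its interpretation is defined for every
interpretation of the variables. -/
def Definable {Sg : ℕ → Type u} {V : Type v} {A : Type w} [OmegaCompletePartialOrder A]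
    (alg : ContSigmaAlg Sg A) (t : ExtTerm Sg V) : Prop :=
  ∀ f : V → A, ∃ a : A, Evals alg f t a

/-- An algebra satisfies the equation `t = t'` if for every interpretation of the variables
both sides are defined and equal. -/
def SatisfiesEq {Sg : ℕ → Type u} {V : Type v} {A : Type w} [OmegaCompletePartialOrder A]
    (alg : ContSigmaAlg Sg A) (t t' : ExtTerm Sg V) : Prop :=
  ∀ f : V → A, ∃ a : A, Evals alg f t a ∧ Evals alg f t' a

theorem Evals.map {Sg : ℕ → Type u} {V : Type v} {A B : Type w}
    [OmegaCompletePartialOrder A] [OmegaCompletePartialOrder B]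
    {algA : ContSigmaAlg Sg A} {algB : ContSigmaAlg Sg B} {h : A → B}
    (hh : IsContHom algA algB h) {f : V → A} {t : ExtTerm Sg V} {a : A}
    (ht : Evals algA f t a) : Evals algB (h ∘ f) t (h a) := by
  induction ht with
  | var v => exact Evals.var (f := h ∘ f) v
  | app σ t a _ ih =>
    rw [hh.map_op]
    exact Evals.app σ t _ ih
  | join t a ha _ ih =>
    obtain ⟨hm, hc⟩ := hh.cont
    rw [hc]
    exact Evals.join t (fun k => h (a k)) (fun k => hm (ha k)) ih

/-- Along an order-embedding homomorphism, a term with a value in the codomain already has a value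
in the domain, mapped to the given one: the embedding reflects the chain condition on joins. -/
theorem Evals.reflect {Sg : ℕ → Type u} {V : Type v} {A B : Type w}
    [OmegaCompletePartialOrder A] [OmegaCompletePartialOrder B]
    {algA : ContSigmaAlg Sg A} {algB : ContSigmaAlg Sg B} {m : B → A}
    (hm : IsContHom algB algA m) (hle : ∀ x y : B, m x ≤ m y ↔ x ≤ y)
    {f : V → B} {t : ExtTerm Sg V} {a : A}
    (ht : Evals algA (m ∘ f) t a) : ∃ b, m b = a ∧ Evals algB f t b := by
  induction ht with
  | var v => exact ⟨f v, rfl, Evals.var v⟩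
  | app σ t a _ ih =>
    choose b hb hev using ih
    refine ⟨algB.op σ b, ?_, Evals.app σ t b hev⟩
    rw [hm.map_op]
    exact congrArg _ (funext hb)
  | join t a ha _ ih =>
    choose b hb hev using ih
    obtain rfl : (fun k => m (b k)) = a := funext hb
    have hb_le : ∀ k, b k ≤ b (k + 1) := fun k => (hle _ _).1 (ha k)
    obtain ⟨_, hc⟩ := hm.cont
    exact ⟨_, hc _, Evals.join t b hb_le hev⟩

/-- The induction is on the term, not on its evaluations: the hypothesis is a whole family of
evaluations, which includes the case of an empty index type. -/
theorem Evals.pi {Sg : ℕ → Type u} {V : Type v} {J : Type w} {A : J → Type w}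
    [∀ j, OmegaCompletePartialOrder (A j)] {algA : ∀ j, ContSigmaAlg Sg (A j)}
    {algP : ContSigmaAlg Sg (∀ j, A j)}
    (hP : ∀ (n : ℕ) (σ : Sg n) (x : Fin n → ∀ j, A j) (j : J),
      algP.op σ x j = (algA j).op σ (fun i => x i j))
    {f : V → ∀ j, A j} (t : ExtTerm Sg V) (a : ∀ j, A j)
    (ht : ∀ j, Evals (algA j) (fun v => f v j) t (a j)) : Evals algP f t a := by
  induction t generalizing a with
  | var v =>
    obtain rfl : f v = a := by
      funext j
      have h := ht j
      generalize a j = x at h ⊢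
      cases h
      rfl
    exact Evals.var v
  | @app n σ t ih =>
    have key : ∀ j, ∃ x : Fin n → A j, a j = (algA j).op σ x ∧
        ∀ i, Evals (algA j) (fun v => f v j) (t i) (x i) := by
      intro j
      have h := ht j
      generalize a j = y at h ⊢
      cases h with
      | app _ _ x hx => exact ⟨x, rfl, hx⟩
    choose x hx hev using key
    obtain rfl : algP.op σ (fun i j => x j i) = a := by
      funext j
      rw [hP, hx]
    exact Evals.app σ t _ fun i => ih i _ fun j => hev j i
  | join t ih =>
    have key : ∀ j, ∃ (x : ℕ → A j) (hx : ∀ k, x k ≤ x (k + 1)),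
        a j = ωSup ⟨x, monotone_nat_of_le_succ hx⟩ ∧
        ∀ k, Evals (algA j) (fun v => f v j) (t k) (x k) := by
      intro j
      have h := ht j
      generalize a j = y at h ⊢
      cases h with
      | join _ x hle hx => exact ⟨x, hle, rfl, hx⟩
    choose x hle hx hev using key
    obtain rfl : ωSup ⟨fun k j => x j k,
        monotone_nat_of_le_succ fun k j => hle j k⟩ = a := by
      funext j
      rw [hx]
      -- joins in the product are coordinatewise by definition
      rfl
    exact Evals.join t _ (fun k j => hle j k) fun k => ih k _ fun j => hev j k

/-- **Every variety of continuous algebras is an HSP-class:** satisfaction of an equation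
`t = t'` between extended terms (over a finite set `V₀` of variables) is preserved by
(H) homomorphic images (surjective continuous `Σ`-homomorphisms),
(S) subalgebras (continuous `Σ`-homomorphisms that are order-embeddings), and
(P) products (with coordinatewise order and operations). -/
theorem varieties_are_HSP_classes
    (Sg : ℕ → Type) (V₀ : Type) [Finite V₀] (t t' : ExtTerm Sg V₀) :
    -- (H) homomorphic images
    (∀ (A B : Type) (_ : OmegaCompletePartialOrder A) (_ : OmegaCompletePartialOrder B)
        (algA : ContSigmaAlg Sg A) (algB : ContSigmaAlg Sg B) (e : A → B),
        IsContHom algA algB e → Function.Surjective e →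
        SatisfiesEq algA t t' → SatisfiesEq algB t t') ∧
    -- (S) subalgebras
    (∀ (A B : Type) (_ : OmegaCompletePartialOrder A) (_ : OmegaCompletePartialOrder B)
        (algA : ContSigmaAlg Sg A) (algB : ContSigmaAlg Sg B) (m : B → A),
        IsContHom algB algA m → (∀ x y : B, m x ≤ m y ↔ x ≤ y) →
        SatisfiesEq algA t t' → SatisfiesEq algB t t') ∧
    -- (P) products
    (∀ (J : Type) (A : J → Type) (_ : ∀ j, OmegaCompletePartialOrder (A j))
        (algA : ∀ j, ContSigmaAlg Sg (A j)) (algP : ContSigmaAlg Sg (∀ j, A j)),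
        (∀ (n : ℕ) (σ : Sg n) (x : Fin n → ∀ j, A j) (j : J),
          algP.op σ x j = (algA j).op σ (fun i => x i j)) →
        (∀ j, SatisfiesEq (algA j) t t') → SatisfiesEq algP t t') := by
  refine ⟨?_, ?_, ?_⟩
  · intro A B _ _ algA algB e he hsurj hA f
    obtain ⟨g, rfl⟩ : ∃ g : V₀ → A, e ∘ g = f := hsurj.comp_left f
    obtain ⟨a, h, h'⟩ := hA g
    exact ⟨e a, h.map he, h'.map he⟩
  · intro A B _ _ algA algB m hm hle hA f
    obtain ⟨a, h, h'⟩ := hA (m ∘ f)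
    obtain ⟨b, hb, hev⟩ := h.reflect hm hle
    obtain ⟨b', hb', hev'⟩ := h'.reflect hm hle
    have heq : m b = m b' := hb.trans hb'.symm
    obtain rfl : b = b' := le_antisymm ((hle _ _).1 heq.le) ((hle _ _).1 heq.ge)
    exact ⟨b, hev, hev'⟩
  · intro J A _ algA algP hP hA f
    choose a h h' using fun j => hA j fun v => f v j
    exact ⟨a, Evals.pi hP t a h, Evals.pi hP t' a h'⟩
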